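/- There exist absolute constants 0 < c ≤ C such that for every θ ∈ (0,1) and every positive integer n, c · n^{(3-θ)/2} θ^{-1} (1-θ)^{-2} ≤ ∫_{A} G(s,t,u,v) ds dt du dv ≤ C · n^{(3-θ)/2} θ^{-1} (1-θ)^{-2}, where A = { (s,t,u,v) ∈ (0,∞)⁴ : 0 < u < 1, v ≥ n^{1/2}, s < n^{1/4} u^{1/2}, t ≥ n^{-1/4} u^{-1/2} s }. -/

import Mathlib

open MeasureTheory Set Real

/-- The integrand `G(s,t,u,v)` from the paper's computation of the completely 1-summing
norm of the identity `OH_n → ℓ^n_p`, with `θ = 2/p'`. Here `p = (s, t, u, v)`. -/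
noncomputable def G (θ : ℝ) (n : ℕ) (p : ℝ × ℝ × ℝ × ℝ) : ℝ :=
  (n : ℝ) ^ (2 : ℕ) * p.1 ^ (-1 - 2 * θ) * p.2.1 ^ (-1 - 2 * θ) *
    min (min (min ((n : ℝ)⁻¹ * p.1 ^ (4 : ℝ) * p.2.2.1 ^ (-2 : ℝ) * p.2.2.2 ^ (-2 : ℝ))
                  ((n : ℝ)⁻¹ * p.2.1 ^ (4 : ℝ)))
             (min (p.1 ^ (4 : ℝ) * p.2.2.1 ^ (-2 : ℝ)) (p.2.1 ^ (4 : ℝ) * p.2.2.2 ^ (-2 : ℝ))))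
        (min (min (p.2.2.1 ^ (-2 : ℝ) * p.2.2.2 ^ (-2 : ℝ)) (p.2.2.1 ^ (-2 : ℝ)))
             (min 1 (p.2.2.2 ^ (-2 : ℝ))))

/-- The region of integration. -/
def A (n : ℕ) : Set (ℝ × ℝ × ℝ × ℝ) :=
  {p | 0 < p.1 ∧ 0 < p.2.1 ∧ 0 < p.2.2.1 ∧ 0 < p.2.2.2 ∧ p.2.2.1 < 1 ∧ (n : ℝ) ^ ((1:ℝ)/2) ≤ p.2.2.2 ∧ p.1 < (n : ℝ) ^ ((1:ℝ)/4) * p.2.2.1 ^ ((1:ℝ)/2) ∧ (n : ℝ) ^ (-(1/4) : ℝ) * p.2.2.1 ^ (-(1/2) : ℝ) * p.1 ≤ p.2.1}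

lemma msand {α : Type*} [MeasurableSpace α] {p q : α → Prop} (hp : MeasurableSet {a | p a})
    (hq : MeasurableSet {a | q a}) : MeasurableSet {a | p a ∧ q a} := hp.inter hq

lemma aux_Ici (c p : ℝ) (hc : 0 < c) (hp : p < -1) :
    ∫⁻ x, (if c ≤ x then ENNReal.ofReal (x ^ p) else 0) = ENNReal.ofReal (-c ^ (p + 1) / (p + 1)) := by
  have h1 : (fun x : ℝ => if c ≤ x then ENNReal.ofReal (x ^ p) else 0)
      = (Ici c).indicator (fun x => ENNReal.ofReal (x ^ p)) := by
    ext x; simp [indicator_apply]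
  rw [h1, lintegral_indicator measurableSet_Ici, setLIntegral_congr (Ioi_ae_eq_Ici (a := c)).symm,
    ← integral_Ioi_rpow_of_lt hp hc, ofReal_integral_eq_lintegral_ofReal]
  · exact integrableOn_Ioi_rpow_of_lt hp hc
  · filter_upwards [ae_restrict_mem measurableSet_Ioi] with x hx
    exact Real.rpow_nonneg (hc.trans hx).le _

lemma aux_Ioo (b p : ℝ) (hb : 0 < b) (hp : -1 < p) :
    ∫⁻ x, (if 0 < x ∧ x < b then ENNReal.ofReal (x ^ p) else 0)
      = ENNReal.ofReal (b ^ (p + 1) / (p + 1)) := by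
  have h1 : (fun x : ℝ => if 0 < x ∧ x < b then ENNReal.ofReal (x ^ p) else 0)
      = (Ioo 0 b).indicator (fun x => ENNReal.ofReal (x ^ p)) := by
    ext x; simp [indicator_apply]
  have h2 : ∫ x in Ioc 0 b, x ^ p = b ^ (p + 1) / (p + 1) := by
    rw [← intervalIntegral.integral_of_le hb.le, integral_rpow (Or.inl hp),
      Real.zero_rpow (by linarith), sub_zero]
  rw [h1, lintegral_indicator measurableSet_Ioo, setLIntegral_congr (Ioo_ae_eq_Ioc (a := 0) (b := b)),
    ← h2, ofReal_integral_eq_lintegral_ofReal]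
  · exact (intervalIntegral.intervalIntegrable_rpow' hp).1
  · filter_upwards [ae_restrict_mem measurableSet_Ioc] with x hx
    exact Real.rpow_nonneg hx.1.le _

/-- bound between real powers used below -/
lemma G_eq (θ : ℝ) (n : ℕ) (hn : 0 < n) (s t u v : ℝ) (h : (s, t, u, v) ∈ A n) :
    G θ n (s, t, u, v) = n * (v ^ (-2 : ℝ) * (t ^ (-1 - 2 * θ) * (s ^ (3 - 2 * θ) * u ^ (-2 : ℝ)))) := by
  obtain ⟨hs, ht, hu, hv, hu1, hvn, hsn, htn⟩ := h
  simp only at hs ht hu hv hu1 hvn hsn htn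
  have hn1 : (1 : ℝ) ≤ n := by exact_mod_cast hn
  have hn0 : (0 : ℝ) < n := by linarith
  have e1 : ((n : ℝ) ^ ((1:ℝ)/2)) ^ 2 = n := by
    rw [← Real.rpow_natCast, ← Real.rpow_mul hn0.le]; norm_num
  have e2 : ((n : ℝ) ^ ((1:ℝ)/4)) ^ 4 = n := by
    rw [← Real.rpow_natCast, ← Real.rpow_mul hn0.le]; norm_num
  have e3 : (u ^ ((1:ℝ)/2)) ^ 4 = u ^ 2 := by
    rw [← Real.rpow_natCast, ← Real.rpow_mul hu.le, ← Real.rpow_natCast]; norm_num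
  have e4 : ((n : ℝ) ^ (-(1/4) : ℝ)) ^ 4 = (n : ℝ)⁻¹ := by
    rw [Real.rpow_neg hn0.le, inv_pow, e2]
  have e5 : (u ^ (-(1/2) : ℝ)) ^ 4 = (u ^ 2)⁻¹ := by
    rw [Real.rpow_neg hu.le, inv_pow, e3]
  have hv2 : (n : ℝ) ≤ v ^ 2 := by
    rw [← e1]; gcongr
  have hs4 : s ^ 4 ≤ n * u ^ 2 := by
    have : s ^ 4 ≤ ((n : ℝ) ^ ((1:ℝ)/4) * u ^ ((1:ℝ)/2)) ^ 4 := by gcongr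
    rwa [mul_pow, e2, e3] at this
  have ht4 : (n : ℝ)⁻¹ * (u ^ 2)⁻¹ * s ^ 4 ≤ t ^ 4 := by
    have : ((n : ℝ) ^ (-(1/4) : ℝ) * u ^ (-(1/2) : ℝ) * s) ^ 4 ≤ t ^ 4 := by gcongr
    rwa [mul_pow, mul_pow, e4, e5] at this
  have r2 : ∀ x : ℝ, 0 < x → x ^ (-2 : ℝ) = (x ^ 2)⁻¹ := fun x hx => by
    rw [Real.rpow_neg hx.le]; norm_cast
  have r4 : ∀ x : ℝ, x ^ (4 : ℝ) = x ^ 4 := fun x => by norm_cast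
  have hs3 : s ^ (3 - 2 * θ) = s ^ (-1 - 2 * θ) * s ^ 4 := by
    rw [← r4, ← Real.rpow_add hs]; ring_nf
  have hu2 : 1 ≤ (u ^ 2)⁻¹ := (one_le_inv₀ (by positivity)).2 (by nlinarith)
  have hv2i : (v ^ 2)⁻¹ ≤ (n : ℝ)⁻¹ := by gcongr
  have hni : (n : ℝ)⁻¹ ≤ 1 := inv_le_one_of_one_le₀ hn1
  have hvp : 0 < (v ^ 2)⁻¹ := by positivity
  have hnp : 0 < (n : ℝ)⁻¹ := by positivity
  have hv1 : (v ^ 2)⁻¹ ≤ 1 := hv2i.trans hni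
  have hM1 : (n : ℝ)⁻¹ * s ^ 4 * (u ^ 2)⁻¹ ≤ 1 := by
    calc (n : ℝ)⁻¹ * s ^ 4 * (u ^ 2)⁻¹ ≤ (n : ℝ)⁻¹ * (n * u ^ 2) * (u ^ 2)⁻¹ := by gcongr
      _ = 1 := by field_simp
  have hT : (n : ℝ)⁻¹ * s ^ 4 * (u ^ 2)⁻¹ * (v ^ 2)⁻¹ ≤ (v ^ 2)⁻¹ := by nlinarith
  have hsu : 0 < s ^ 4 * (u ^ 2)⁻¹ := by positivity
  have k2 : (v ^ 2)⁻¹ ≤ (u ^ 2)⁻¹ * (v ^ 2)⁻¹ := by nlinarith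
  simp only [G, r2 u hu, r2 v hv, r4]
  rw [min_eq_left (a := min _ _) (b := min (min _ _) (min 1 _)), min_eq_left (a := min _ _), min_eq_left]
  · rw [hs3]; field_simp
  · calc (n : ℝ)⁻¹ * s ^ 4 * (u ^ 2)⁻¹ * (v ^ 2)⁻¹ = ((n : ℝ)⁻¹ * (u ^ 2)⁻¹ * s ^ 4) * (v ^ 2)⁻¹ := by ring
      _ ≤ t ^ 4 * (n : ℝ)⁻¹ := by gcongr
      _ = _ := by ring
  · refine (min_le_left _ _).trans (le_min ?_ ?_)
    · calc (n : ℝ)⁻¹ * s ^ 4 * (u ^ 2)⁻¹ * (v ^ 2)⁻¹ = (s ^ 4 * (u ^ 2)⁻¹) * ((n : ℝ)⁻¹ * (v ^ 2)⁻¹) := by ring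
        _ ≤ (s ^ 4 * (u ^ 2)⁻¹) * (1 * 1) := by gcongr
        _ = _ := by ring
    · calc (n : ℝ)⁻¹ * s ^ 4 * (u ^ 2)⁻¹ * (v ^ 2)⁻¹ = ((n : ℝ)⁻¹ * (u ^ 2)⁻¹ * s ^ 4) * (v ^ 2)⁻¹ := by ring
        _ ≤ t ^ 4 * (v ^ 2)⁻¹ := by gcongr
  · refine (min_le_left _ _).trans ((min_le_left _ _).trans (hT.trans ?_))
    exact le_min (le_min k2 (hv1.trans hu2)) (le_min hv1 le_rfl)

/-- Product form of the integrand, with values in `[0,∞]`. -/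
noncomputable def fV (n : ℕ) (v : ℝ) : ENNReal :=
  if (n : ℝ) ^ ((1:ℝ)/2) ≤ v then ENNReal.ofReal (v ^ (-2 : ℝ)) else 0

noncomputable def fT (θ : ℝ) (n : ℕ) (s u t : ℝ) : ENNReal :=
  if (n : ℝ) ^ (-(1/4) : ℝ) * u ^ (-(1/2) : ℝ) * s ≤ t then ENNReal.ofReal (t ^ (-1 - 2 * θ)) else 0

noncomputable def fS (θ : ℝ) (n : ℕ) (u s : ℝ) : ENNReal :=
  if 0 < s ∧ s < (n : ℝ) ^ ((1:ℝ)/4) * u ^ ((1:ℝ)/2) then ENNReal.ofReal (s ^ (3 - 2 * θ)) else 0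

noncomputable def fU (u : ℝ) : ENNReal :=
  if 0 < u ∧ u < 1 then ENNReal.ofReal (u ^ (-2 : ℝ)) else 0

lemma fV_meas (n : ℕ) : Measurable (fV n) :=
  Measurable.ite (measurableSet_le (by fun_prop) (by fun_prop)) (by fun_prop) (by fun_prop)

lemma fU_meas : Measurable fU :=
  Measurable.ite (msand (measurableSet_lt (by fun_prop) (by fun_prop))
    (measurableSet_lt (by fun_prop) (by fun_prop))) (by fun_prop) (by fun_prop)

lemma fS_meas (θ : ℝ) (n : ℕ) : Measurable (fun p : ℝ × ℝ => fS θ n p.1 p.2) :=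
  Measurable.ite (msand (measurableSet_lt (by fun_prop) (by fun_prop))
    (measurableSet_lt (by fun_prop) (by fun_prop))) (by fun_prop) (by fun_prop)

lemma fT_meas (θ : ℝ) (n : ℕ) : Measurable (fun p : ℝ × ℝ × ℝ => fT θ n p.1 p.2.1 p.2.2) :=
  Measurable.ite (measurableSet_le (by fun_prop) (by fun_prop)) (by fun_prop) (by fun_prop)

lemma ind_eq (θ : ℝ) (n : ℕ) (hn : 0 < n) (s t u v : ℝ) :
    (A n).indicator (fun p => ENNReal.ofReal (G θ n p)) (s, t, u, v)
      = ENNReal.ofReal n * (fV n v * (fT θ n s u t * (fS θ n u s * fU u))) := by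
  have hn0 : (0 : ℝ) < n := by exact_mod_cast hn
  by_cases h : (s, t, u, v) ∈ A n
  · rw [indicator_of_mem h, G_eq θ n hn s t u v h]
    obtain ⟨hs, ht, hu, hv, hu1, hvn, hsn, htn⟩ := h
    simp only at hs ht hu hv hu1 hvn hsn htn
    rw [fV, fT, fS, fU, if_pos hvn, if_pos htn, if_pos ⟨hs, hsn⟩, if_pos ⟨hu, hu1⟩,
      ENNReal.ofReal_mul (by positivity), ENNReal.ofReal_mul (by positivity),
      ENNReal.ofReal_mul (by positivity), ENNReal.ofReal_mul (by positivity)]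
  · rw [indicator_of_notMem h]
    by_cases h1 : (n : ℝ) ^ ((1:ℝ)/2) ≤ v
    swap
    · rw [fV, if_neg h1]; simp
    by_cases h2 : (n : ℝ) ^ (-(1/4) : ℝ) * u ^ (-(1/2) : ℝ) * s ≤ t
    swap
    · rw [fT, if_neg h2]; simp
    by_cases h3 : 0 < s ∧ s < (n : ℝ) ^ ((1:ℝ)/4) * u ^ ((1:ℝ)/2)
    swap
    · rw [fS, if_neg h3]; simp
    by_cases h4 : 0 < u ∧ u < 1
    swap
    · rw [fU, if_neg h4]; simp
    exfalso; apply h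
    have hs := h3.1
    have hu := h4.1
    exact ⟨h3.1, lt_of_lt_of_le (by positivity) h2, h4.1, lt_of_lt_of_le (by positivity) h1, h4.2, h1,
      h3.2, h2⟩

lemma A_meas (n : ℕ) : MeasurableSet (A n) := by
  unfold A
  refine msand ?_ (msand ?_ (msand ?_ (msand ?_ (msand ?_ (msand ?_ (msand ?_ ?_))))))
  all_goals first
    | exact measurableSet_lt (by fun_prop) (by fun_prop)
    | exact measurableSet_le (by fun_prop) (by fun_prop)

lemma G_meas (θ : ℝ) (n : ℕ) : Measurable (G θ n) := by
  unfold G; fun_prop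

lemma int_T (θ : ℝ) (h0 : 0 < θ) (h1 : θ < 1) (n : ℕ) (hn : 0 < n) (s u : ℝ) :
    (∫⁻ t, fT θ n s u t) * (fS θ n u s * fU u)
      = ENNReal.ofReal ((n : ℝ) ^ (θ / 2) / (2 * θ)) * (
        (if 0 < s ∧ s < (n : ℝ) ^ ((1:ℝ)/4) * u ^ ((1:ℝ)/2) then ENNReal.ofReal (s ^ (3 - 4 * θ)) else 0)
        * (if 0 < u ∧ u < 1 then ENNReal.ofReal (u ^ (θ - 2)) else 0)) := by
  have hn0 : (0 : ℝ) < n := by exact_mod_cast hn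
  by_cases h3 : 0 < s ∧ s < (n : ℝ) ^ ((1:ℝ)/4) * u ^ ((1:ℝ)/2)
  swap
  · rw [fS, if_neg h3, if_neg h3]; simp
  by_cases h4 : 0 < u ∧ u < 1
  swap
  · rw [fU, if_neg h4, if_neg h4]; simp
  have hs := h3.1
  have hu := h4.1
  unfold fT
  rw [aux_Ici _ _ (by positivity) (by linarith), fS, fU, if_pos h3, if_pos h4, if_pos h3, if_pos h4,
    ← ENNReal.ofReal_mul (by positivity), ← ENNReal.ofReal_mul' (by positivity),
    ← ENNReal.ofReal_mul (by positivity), ← ENNReal.ofReal_mul (by positivity)]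
  congr 1
  rw [Real.mul_rpow (by positivity) hs.le, Real.mul_rpow (by positivity) (by positivity),
    ← Real.rpow_mul hn0.le, ← Real.rpow_mul hu.le]
  have a1 : -(1 / 4) * (-1 - 2 * θ + 1) = θ / 2 := by ring
  have a2 : -(1 / 2) * (-1 - 2 * θ + 1) = θ := by ring
  have a3 : -1 - 2 * θ + 1 = - (2 * θ) := by ring
  have a4 : s ^ (3 - 4 * θ) = s ^ (-(2 * θ)) * s ^ (3 - 2 * θ) := by
    rw [← Real.rpow_add hs]; ring_nf
  have a5 : u ^ (θ - 2) = u ^ θ * u ^ (-2 : ℝ) := by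
    rw [← Real.rpow_add hu]; ring_nf
  rw [a1, a2, a3, a4, a5]
  field_simp

lemma int_S (θ : ℝ) (h0 : 0 < θ) (h1 : θ < 1) (n : ℕ) (hn : 0 < n) (u : ℝ) :
    (∫⁻ s, (if 0 < s ∧ s < (n : ℝ) ^ ((1:ℝ)/4) * u ^ ((1:ℝ)/2) then ENNReal.ofReal (s ^ (3 - 4 * θ)) else 0))
        * (if 0 < u ∧ u < 1 then ENNReal.ofReal (u ^ (θ - 2)) else 0)
      = ENNReal.ofReal ((n : ℝ) ^ (1 - θ) / (4 * (1 - θ))) *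
        (if 0 < u ∧ u < 1 then ENNReal.ofReal (u ^ (-θ)) else 0) := by
  have hn0 : (0 : ℝ) < n := by exact_mod_cast hn
  have h1' : 0 < 1 - θ := by linarith
  by_cases h4 : 0 < u ∧ u < 1
  swap
  · rw [if_neg h4, if_neg h4]; simp
  have hu := h4.1
  rw [aux_Ioo _ _ (by positivity) (by linarith), if_pos h4, if_pos h4,
    ← ENNReal.ofReal_mul' (by positivity), ← ENNReal.ofReal_mul (by positivity)]
  congr 1
  rw [Real.mul_rpow (by positivity) (by positivity),
    ← Real.rpow_mul hn0.le, ← Real.rpow_mul hu.le]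
  have a1 : 1 / 4 * (3 - 4 * θ + 1) = 1 - θ := by ring
  have a2 : 1 / 2 * (3 - 4 * θ + 1) = 2 - 2 * θ := by ring
  have a3 : 3 - 4 * θ + 1 = 4 * (1 - θ) := by ring
  have a5 : u ^ (-θ) = u ^ (2 - 2 * θ) * u ^ (θ - 2) := by
    rw [← Real.rpow_add hu]; ring_nf
  rw [a1, a2, a3, a5]
  field_simp

lemma lint_eq (θ : ℝ) (h0 : 0 < θ) (h1 : θ < 1) (n : ℕ) (hn : 0 < n) :
    ∫⁻ p in A n, ENNReal.ofReal (G θ n p) =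
      ENNReal.ofReal (1 / 8 * ((n : ℝ) ^ ((3 - θ) / 2) * θ ^ (-1 : ℝ) * (1 - θ) ^ (-2 : ℝ))) := by
  have hn0 : (0 : ℝ) < n := by exact_mod_cast hn
  have h1' : 0 < 1 - θ := by linarith
  have mF : Measurable ((A n).indicator (fun p => ENNReal.ofReal (G θ n p))) :=
    (G_meas θ n).ennreal_ofReal.indicator (A_meas n)
  have mV := fV_meas n
  have mU := fU_meas
  have mS := fS_meas θ n
  have mT := fT_meas θ n
  have iV : ∫⁻ v, fV n v = ENNReal.ofReal ((n : ℝ) ^ (-(1/2) : ℝ)) := by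
    unfold fV
    rw [aux_Ici _ _ (by positivity) (by norm_num), ← Real.rpow_mul hn0.le]
    norm_num
  have iU : ∫⁻ u : ℝ, (if 0 < u ∧ u < 1 then ENNReal.ofReal (u ^ (-θ)) else 0)
      = ENNReal.ofReal (1 / (1 - θ)) := by
    rw [aux_Ioo 1 _ one_pos (by linarith), Real.one_rpow]; ring_nf
  have step1 : ∀ s t u, ∫⁻ v, ENNReal.ofReal n * (fV n v * (fT θ n s u t * (fS θ n u s * fU u)))
      = ENNReal.ofReal n * (∫⁻ v, fV n v) * (fT θ n s u t * (fS θ n u s * fU u)) := by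
    intro s t u
    rw [lintegral_const_mul _ (by fun_prop), lintegral_mul_const _ mV, mul_assoc]
  have mTT : ∀ s u, Measurable (fun t => fT θ n s u t) := fun s u =>
    mT.comp (by fun_prop : Measurable fun t : ℝ => (s, u, t))
  have mTtu : ∀ s, Measurable (fun p : ℝ × ℝ => fT θ n s p.2 p.1) := fun s =>
    mT.comp (by fun_prop : Measurable fun p : ℝ × ℝ => (s, p.2, p.1))
  have mSu : ∀ s, Measurable (fun p : ℝ × ℝ => fS θ n p.2 s) := fun s =>
    mS.comp (by fun_prop : Measurable fun p : ℝ × ℝ => (p.2, s))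
  have m3 : ∀ s, Measurable (fun p : ℝ × ℝ => fT θ n s p.2 p.1 * (fS θ n p.2 s * fU p.2)) := fun s =>
    (mTtu s).mul ((mSu s).mul (mU.comp measurable_snd))
  have step2 : ∀ s, ∫⁻ t, ∫⁻ u, ENNReal.ofReal n * (∫⁻ v, fV n v) * (fT θ n s u t * (fS θ n u s * fU u))
      = ENNReal.ofReal n * (∫⁻ v, fV n v) * (∫⁻ u, (∫⁻ t, fT θ n s u t) * (fS θ n u s * fU u)) := by
    intro s
    rw [lintegral_lintegral_swap ((m3 s).const_mul _).aemeasurable]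
    rw [← lintegral_const_mul' (ENNReal.ofReal n * (∫⁻ v, fV n v)) _
      (by rw [iV]; exact ENNReal.mul_ne_top ENNReal.ofReal_ne_top ENNReal.ofReal_ne_top)]
    refine lintegral_congr fun u => ?_
    rw [← lintegral_mul_const _ (mTT s u), lintegral_const_mul _ ((mTT s u).mul_const _)]
  have mH1 : Measurable (fun p : ℝ × ℝ => if 0 < p.1 ∧ p.1 < (n : ℝ) ^ ((1:ℝ)/4) * p.2 ^ ((1:ℝ)/2) then ENNReal.ofReal (p.1 ^ (3 - 4 * θ)) else 0) :=
    Measurable.ite (msand (measurableSet_lt (by fun_prop) (by fun_prop))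
      (measurableSet_lt (by fun_prop) (by fun_prop))) (by fun_prop) (by fun_prop)
  have mH2 : Measurable (fun u : ℝ => if 0 < u ∧ u < 1 then ENNReal.ofReal (u ^ (θ - 2)) else 0) :=
    Measurable.ite (msand (measurableSet_lt (by fun_prop) (by fun_prop))
      (measurableSet_lt (by fun_prop) (by fun_prop))) (by fun_prop) (by fun_prop)
  rw [← lintegral_indicator (A_meas n), Measure.volume_eq_prod, lintegral_prod _ mF.aemeasurable]
  have e1 : ∀ s, ∫⁻ q : ℝ × ℝ × ℝ, (A n).indicator (fun p => ENNReal.ofReal (G θ n p)) (s, q)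
      = ENNReal.ofReal n * (∫⁻ v, fV n v) * (∫⁻ u, (∫⁻ t, fT θ n s u t) * (fS θ n u s * fU u)) := by
    intro s
    have ms : Measurable (fun q : ℝ × ℝ × ℝ => (A n).indicator (fun p => ENNReal.ofReal (G θ n p)) (s, q)) :=
      mF.comp (by fun_prop)
    rw [Measure.volume_eq_prod, lintegral_prod _ ms.aemeasurable, ← step2]
    congr 1; ext t
    have mt : Measurable (fun q : ℝ × ℝ => (A n).indicator (fun p => ENNReal.ofReal (G θ n p)) (s, t, q)) :=
      mF.comp (by fun_prop)
    rw [Measure.volume_eq_prod, lintegral_prod _ mt.aemeasurable]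
    congr 1; ext u
    rw [← step1]
    congr 1; ext v
    exact ind_eq θ n hn s t u v
  simp_rw [e1, int_T θ h0 h1 n hn]
  rw [lintegral_const_mul' _ _ (by rw [iV]; exact ENNReal.mul_ne_top ENNReal.ofReal_ne_top ENNReal.ofReal_ne_top)]
  simp_rw [lintegral_const_mul' _ _ ENNReal.ofReal_ne_top]
  rw [lintegral_lintegral_swap (mH1.mul (mH2.comp measurable_snd)).aemeasurable]
  have e2 : ∀ u : ℝ, (∫⁻ s, (if 0 < s ∧ s < (n : ℝ) ^ ((1:ℝ)/4) * u ^ ((1:ℝ)/2) then ENNReal.ofReal (s ^ (3 - 4 * θ)) else 0)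
        * (if 0 < u ∧ u < 1 then ENNReal.ofReal (u ^ (θ - 2)) else 0))
      = ENNReal.ofReal ((n : ℝ) ^ (1 - θ) / (4 * (1 - θ))) *
        (if 0 < u ∧ u < 1 then ENNReal.ofReal (u ^ (-θ)) else 0) := by
    intro u
    rw [← int_S θ h0 h1 n hn u, lintegral_mul_const]
    exact mH1.comp (by fun_prop : Measurable fun s : ℝ => (s, u))
  simp_rw [e2]
  rw [lintegral_const_mul' _ _ ENNReal.ofReal_ne_top, iU, iV,
    ← ENNReal.ofReal_mul (by positivity), ← ENNReal.ofReal_mul (by positivity),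
    ← ENNReal.ofReal_mul (by positivity), ← ENNReal.ofReal_mul (by positivity)]
  congr 1
  have a1 : (n : ℝ) ^ ((3 - θ) / 2) = n * (n : ℝ) ^ (-(1/2) : ℝ) * (n : ℝ) ^ (θ / 2) * (n : ℝ) ^ (1 - θ) := by
    nth_rewrite 2 [← Real.rpow_one (n : ℝ)]
    rw [← Real.rpow_add hn0, ← Real.rpow_add hn0, ← Real.rpow_add hn0]; ring_nf
  have a2 : (1 - θ) ^ (-2 : ℝ) = ((1 - θ) ^ 2)⁻¹ := by
    rw [Real.rpow_neg h1'.le]; norm_cast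
  rw [a1, a2, Real.rpow_neg_one]
  field_simp
  norm_num

theorem stmt_11 :
    ∃ c C : ℝ, 0 < c ∧ c ≤ C ∧ ∀ θ : ℝ, 0 < θ → θ < 1 → ∀ n : ℕ, 0 < n →
      c * ((n : ℝ) ^ ((3 - θ) / 2) * θ ^ (-1 : ℝ) * (1 - θ) ^ (-2 : ℝ)) ≤ (∫ p in A n, G θ n p) ∧
      (∫ p in A n, G θ n p) ≤ C * ((n : ℝ) ^ ((3 - θ) / 2) * θ ^ (-1 : ℝ) * (1 - θ) ^ (-2 : ℝ)) := by
  refine ⟨1 / 8, 1 / 8, by norm_num, le_rfl, fun θ h0 h1 n hn => ?_⟩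
  have h1' : 0 < 1 - θ := by linarith
  have key : (∫ p in A n, G θ n p)
      = 1 / 8 * ((n : ℝ) ^ ((3 - θ) / 2) * θ ^ (-1 : ℝ) * (1 - θ) ^ (-2 : ℝ)) := by
    rw [integral_eq_lintegral_of_nonneg_ae, lint_eq θ h0 h1 n hn, ENNReal.toReal_ofReal (by positivity)]
    · filter_upwards [ae_restrict_mem (A_meas n)] with p hp
      obtain ⟨s, t, u, v⟩ := p
      rw [G_eq θ n hn s t u v hp]
      obtain ⟨hs, ht, hu, hv, -⟩ := hp
      simp only at hs ht hu hv
      simp only [Pi.zero_apply]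
      positivity
    · exact (G_meas θ n).aestronglyMeasurable
  exact ⟨key.ge, key.le⟩
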